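/- The mutual information of the first equivalent channel equals the capacity of the ℤ/2ℤ partition channel: for every σ > 0 and every integer r ≥ 2 with M = 2^{r−2}, setting f_Z(z|b) = (1/M)·f_{σ,2}(z − b), one has Σ_{b∈{0,1}} (1/2)·∫₀^{2^{r−1}} f_Z(z|b) · log( f_Z(z|b) / ( (1/2)(f_Z(z|0) + f_Z(z|1)) ) ) dz = h(1,σ) − h(2,σ) + log 2; in particular this quantity does not depend on r. -/

import Mathlib

open MeasureTheory Real Filter

/-- The Gaussian density with zero mean and standard deviation `σ`. -/
noncomputable def gaussDen (σ x : ℝ) : ℝ :=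
  (Real.sqrt (2 * Real.pi * σ ^ 2))⁻¹ * Real.exp (-x ^ 2 / (2 * σ ^ 2))

/-- The `αℤ`-aliased Gaussian density `f_{σ,α}(x) = Σ_{k∈ℤ} g_σ(x − kα)`. -/
noncomputable def aliasedDen (σ α x : ℝ) : ℝ := ∑' k : ℤ, gaussDen σ (x - (k : ℝ) * α)

/-- The differential entropy `h(α,σ)` of the `αℤ`-aliased Gaussian noise
on the fundamental region `[0, α)`. -/
noncomputable def aliasedEnt (α σ : ℝ) : ℝ :=
  -∫ x in Set.Ico (0 : ℝ) α, aliasedDen σ α x * Real.log (aliasedDen σ α x)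

/-- Conditional density `f_Z(z|b) = (1/M)·f_{σ,2}(z − b)`, `M = 2^{r−2}`, of the first
equivalent channel of the binary partition chain `ℤ/2ℤ/⋯/2^{r−1}ℤ` under uniform inputs. -/
noncomputable def eqChDen (σ : ℝ) (r : ℕ) (z b : ℝ) : ℝ :=
  ((1 : ℝ) / 2 ^ (r - 2)) * aliasedDen σ 2 (z - b)

/-!
Write `f_α` for the `αℤ`-aliased Gaussian density. The mutual information of a channel with finite
input alphabet is the entropy of the output density minus the mean entropy of the conditional
densities. The conditional densities are `M⁻¹ f_{qα}(z - bα)` over `M` periods of length `qα`, and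
since `f_α(z) = ∑_{b < q} f_{qα}(z - bα)`, the output density is `(Mq)⁻¹ f_α` over `Mq` periods of
length `α`. Spreading a periodic density evenly over `n` periods adds `log n` to its entropy, so the
two entropies are `h(α, σ) + log (Mq)` and `h(qα, σ) + log M`, and `M` cancels in the difference.
-/

section Information

variable {X ι : Type*}

/-- The differential entropy, in nats, of a density `p` with respect to the reference measure `μ`.
A density on a set `s` is encoded by taking `μ` to be a restriction to `s`. -/
noncomputable def differentialEntropy [MeasurableSpace X] (μ : Measure X) (p : X → ℝ) : ℝ :=
  ∫ x, negMulLog (p x) ∂μ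

/-- The output density of the channel with transition densities `p b`, `b ∈ s`, when the input `b`
has probability `w b`. -/
def outputDensity (s : Finset ι) (w : ι → ℝ) (p : ι → X → ℝ) (x : X) : ℝ :=
  ∑ b ∈ s, w b * p b x

/-- The mutual information, in nats, between input and output of the channel with transition
densities `p b`, `b ∈ s`, with respect to `μ`, when the input `b` has probability `w b`. -/
noncomputable def mutualInfo [MeasurableSpace X] (μ : Measure X) (s : Finset ι) (w : ι → ℝ)
    (p : ι → X → ℝ) : ℝ :=
  ∑ b ∈ s, w b * ∫ x, p b x * log (p b x / outputDensity s w p x) ∂μ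

lemma mul_mul_log_div_outputDensity {s : Finset ι} {w : ι → ℝ} {p : ι → X → ℝ} {x : X}
    (hw : ∀ b ∈ s, 0 ≤ w b) (hp : ∀ b ∈ s, 0 ≤ p b x) {b : ι} (hb : b ∈ s) :
    w b * (p b x * log (p b x / outputDensity s w p x)) =
      -w b * (p b x * log (outputDensity s w p x)) - w b * negMulLog (p b x) := by
  rcases (hw b hb).eq_or_lt with hwb | hwb
  · simp [← hwb]
  rcases (hp b hb).eq_or_lt with hpb | hpb
  · simp [← hpb]
  have output_pos : 0 < outputDensity s w p x :=
    Finset.sum_pos' (fun c hc ↦ mul_nonneg (hw c hc) (hp c hc)) ⟨b, hb, mul_pos hwb hpb⟩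
  rw [log_div hpb.ne' output_pos.ne', negMulLog]
  ring

theorem mutualInfo_eq_differentialEntropy_sub [MeasurableSpace X] {μ : Measure X} {s : Finset ι}
    {w : ι → ℝ} {p : ι → X → ℝ} (hw : ∀ b ∈ s, 0 ≤ w b) (hp : ∀ b ∈ s, ∀ x, 0 ≤ p b x)
    (hent : ∀ b ∈ s, Integrable (fun x ↦ negMulLog (p b x)) μ)
    (hcross : ∀ b ∈ s, Integrable (fun x ↦ p b x * log (outputDensity s w p x)) μ) :
    mutualInfo μ s w p =
      differentialEntropy μ (outputDensity s w p) - ∑ b ∈ s, w b * differentialEntropy μ (p b) := by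
  have output_entropy : differentialEntropy μ (outputDensity s w p) =
      ∑ b ∈ s, -w b * ∫ x, p b x * log (outputDensity s w p x) ∂μ := by
    simp_rw [differentialEntropy, negMulLog, ← integral_const_mul]
    rw [← integral_finsetSum _ fun b hb ↦ (hcross b hb).const_mul (-w b)]
    refine integral_congr_ae (.of_forall fun x ↦ ?_)
    simp only [neg_mul, Finset.sum_neg_distrib, ← mul_assoc, ← Finset.sum_mul]
    rfl
  rw [output_entropy, mutualInfo, ← Finset.sum_sub_distrib]
  refine Finset.sum_congr rfl fun b hb ↦ ?_
  simp_rw [differentialEntropy, ← integral_const_mul]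
  rw [← integral_sub ((hcross b hb).const_mul (-w b)) ((hent b hb).const_mul (w b))]
  exact integral_congr_ae
    (.of_forall fun x ↦ mul_mul_log_div_outputDensity hw (fun c hc ↦ hp c hc x) hb)

end Information

section Periodic

variable {E : Type*} [NormedAddCommGroup E] [NormedSpace ℝ E] {T : ℝ}

lemma setIntegral_Ico_sub_of_periodic {f : ℝ → E} (hf : Function.Periodic f T) (hT : 0 ≤ T)
    (b : ℝ) : ∫ x in Set.Ico 0 T, f (x - b) = ∫ x in Set.Ico 0 T, f x := by
  simp_rw [integral_Ico_eq_integral_Ioc, ← intervalIntegral.integral_of_le hT]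
  simpa [sub_eq_neg_add] using hf.intervalIntegral_add_eq (-b) 0

lemma setIntegral_Ico_nat_mul_of_periodic {f : ℝ → E} (hf : Function.Periodic f T) (hT : 0 < T)
    (hf_int : IntervalIntegrable f volume 0 T) (n : ℕ) :
    ∫ x in Set.Ico 0 (n * T), f x = (n : ℝ) • ∫ x in Set.Ico 0 T, f x := by
  simp_rw [integral_Ico_eq_integral_Ioc, ← intervalIntegral.integral_of_le hT.le,
    ← intervalIntegral.integral_of_le (show 0 ≤ n * T by positivity)]
  simpa [Nat.cast_smul_eq_nsmul] using
    hf.intervalIntegral_add_zsmul_eq n 0 (hf.intervalIntegrable₀ hT.ne' hf_int)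

lemma differentialEntropy_Ico_sub_of_periodic {f : ℝ → ℝ} (hf : Function.Periodic f T)
    (hT : 0 ≤ T) (b : ℝ) :
    differentialEntropy (volume.restrict (Set.Ico 0 T)) (fun x ↦ f (x - b)) =
      differentialEntropy (volume.restrict (Set.Ico 0 T)) f :=
  setIntegral_Ico_sub_of_periodic (hf.comp negMulLog) hT b

lemma differentialEntropy_Ico_nat_mul_of_periodic {f : ℝ → ℝ} (hf : Function.Periodic f T)
    (hT : 0 < T) (hf_int : IntervalIntegrable f volume 0 T)
    (hf_ent : IntervalIntegrable (fun x ↦ negMulLog (f x)) volume 0 T)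
    (hmass : ∫ x in Set.Ico 0 T, f x = 1) {n : ℕ} (hn : n ≠ 0) :
    differentialEntropy (volume.restrict (Set.Ico 0 (n * T))) (fun x ↦ (n : ℝ)⁻¹ * f x) =
      differentialEntropy (volume.restrict (Set.Ico 0 T)) f + log n := by
  have hper : Function.Periodic (fun x ↦ negMulLog ((n : ℝ)⁻¹ * f x)) T :=
    hf.comp fun y ↦ negMulLog ((n : ℝ)⁻¹ * y)
  have integrableOn_Ico {g : ℝ → ℝ} (hg : IntervalIntegrable g volume 0 T) :
      IntegrableOn g (Set.Ico 0 T) :=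
    (intervalIntegrable_iff_integrableOn_Ico_of_le hT.le).mp hg
  simp only [negMulLog_mul] at hper
  simp only [differentialEntropy, negMulLog_mul]
  rw [setIntegral_Ico_nat_mul_of_periodic hper hT ((hf_int.mul_const _).add (hf_ent.const_mul _)),
    integral_add (integrableOn_Ico (hf_int.mul_const _)) (integrableOn_Ico (hf_ent.const_mul _)),
    integral_mul_const, integral_const_mul, hmass, negMulLog, log_inv, smul_eq_mul]
  field_simp
  ring

end Periodic

section Periodization

variable {E : Type*} [NormedAddCommGroup E] [NormedSpace ℝ E] {g : ℝ → E} {T : ℝ}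

lemma hasSum_setIntegral_Ico_sub_int_mul (hg : Integrable g) (hT : 0 < T) :
    HasSum (fun k : ℤ ↦ ∫ x in Set.Ico 0 T, g (x - k * T)) (∫ x, g x) := by
  have sum_translates : HasSum
      (fun k : ℤ ↦ ∫ x in Set.Ico (0 + k • T) (0 + (k + 1) • T), g x) (∫ x, g x) := by
    simpa only [iUnion_Ico_add_zsmul hT, setIntegral_univ] using
      hasSum_integral_iUnion (fun _ ↦ measurableSet_Ico) (Set.pairwise_disjoint_Ico_add_zsmul 0 T)
        hg.integrableOn
  convert (Equiv.neg ℤ).hasSum_iff.mpr sum_translates using 2 with k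
  have endpoints : (0 : ℝ) + -k • T ≤ 0 + (-k + 1) • T := by
    gcongr
    exact (lt_add_one _).le
  rw [Function.comp_apply, Equiv.neg_apply, integral_Ico_eq_integral_Ioc,
    integral_Ico_eq_integral_Ioc, ← intervalIntegral.integral_of_le hT.le,
    ← intervalIntegral.integral_of_le endpoints, intervalIntegral.integral_comp_sub_right]
  congr 1 <;> simp [add_mul, sub_eq_neg_add]

lemma setIntegral_Ico_tsum_sub_int_mul (hg : Integrable g) (hT : 0 < T) :
    ∫ x in Set.Ico 0 T, ∑' k : ℤ, g (x - k * T) = ∫ x, g x := by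
  have hsum := hasSum_setIntegral_Ico_sub_int_mul hg hT
  rw [← hsum.tsum_eq]
  exact (integral_tsum_of_summable_integral_norm
    (fun k : ℤ ↦ (hg.comp_sub_right (k * T)).integrableOn)
    (hasSum_setIntegral_Ico_sub_int_mul hg.norm hT).summable).symm

end Periodization

lemma tsum_int_eq_sum_range_tsum {E : Type*} [NormedAddCommGroup E] [CompleteSpace E] {f : ℤ → E}
    {q : ℕ} (hq : q ≠ 0) (hf : Summable f) :
    ∑' k, f k = ∑ b ∈ Finset.range q, ∑' k : ℤ, f (k * q + b) := by
  have : NeZero q := ⟨hq⟩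
  let residueEquiv : Fin q × ℤ ≃ ℤ := (Equiv.prodComm _ _).trans (Int.divModEquiv q).symm
  calc ∑' k, f k = ∑' bk : Fin q × ℤ, f (residueEquiv bk) := (residueEquiv.tsum_eq f).symm
    _ = ∑' (b : Fin q) (k : ℤ), f (residueEquiv (b, k)) :=
        (residueEquiv.summable_iff.mpr hf).tsum_prod
    _ = ∑ b ∈ Finset.range q, ∑' k : ℤ, f (k * q + b) := by
        rw [tsum_fintype, Finset.sum_range]
        rfl

section AliasedGaussian

variable {σ α : ℝ}

lemma gaussDen_nonneg (σ x : ℝ) : 0 ≤ gaussDen σ x := by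
  unfold gaussDen
  positivity

lemma gaussDen_pos (hσ : σ ≠ 0) (x : ℝ) : 0 < gaussDen σ x := by
  unfold gaussDen
  positivity

lemma gaussDen_eq_gaussianPDFReal (σ : ℝ) :
    gaussDen σ = ProbabilityTheory.gaussianPDFReal 0 ⟨σ ^ 2, sq_nonneg σ⟩ := by
  ext x
  simp only [gaussDen, ProbabilityTheory.gaussianPDFReal, sub_zero]
  rfl

lemma integrable_gaussDen (σ : ℝ) : Integrable (gaussDen σ) := by
  rw [gaussDen_eq_gaussianPDFReal]
  exact ProbabilityTheory.integrable_gaussianPDFReal _ _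

lemma integral_gaussDen (hσ : σ ≠ 0) : ∫ x, gaussDen σ x = 1 := by
  rw [gaussDen_eq_gaussianPDFReal]
  exact ProbabilityTheory.integral_gaussianPDFReal_eq_one 0
    (NNReal.coe_ne_zero.mp (pow_ne_zero 2 hσ))

-- Expanding `(x - kα)²` makes the aliased Gaussian a theta series, so that its convergence and
-- continuity are those of `jacobiTheta₂`.
lemma ofReal_gaussDen_sub_int_mul (hσ : σ ≠ 0) (α x : ℝ) (k : ℤ) :
    (gaussDen σ (x - k * α) : ℂ) = gaussDen σ x * jacobiTheta₂_term k
      (-Complex.I * (x * α / (2 * π * σ ^ 2))) (Complex.I * (α ^ 2 / (2 * π * σ ^ 2))) := by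
  have hσ' : (σ : ℂ) ≠ 0 := Complex.ofReal_ne_zero.mpr hσ
  have hπ : (π : ℂ) ≠ 0 := Complex.ofReal_ne_zero.mpr pi_ne_zero
  simp only [gaussDen, jacobiTheta₂_term]
  push_cast
  rw [mul_assoc _ (Complex.exp _), ← Complex.exp_add]
  congr 2
  field_simp
  linear_combination (2 * k * x * α - k ^ 2 * α ^ 2) * Complex.I_sq

lemma theta_modulus_im_pos (hσ : σ ≠ 0) (hα : α ≠ 0) :
    0 < (Complex.I * (α ^ 2 / (2 * π * σ ^ 2)) : ℂ).im := by
  rw [Complex.I_mul_im]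
  norm_cast
  positivity

lemma hasSum_ofReal_gaussDen_sub_int_mul (hσ : σ ≠ 0) (hα : α ≠ 0) (x : ℝ) :
    HasSum (fun k : ℤ ↦ (gaussDen σ (x - k * α) : ℂ)) (gaussDen σ x * jacobiTheta₂
      (-Complex.I * (x * α / (2 * π * σ ^ 2))) (Complex.I * (α ^ 2 / (2 * π * σ ^ 2)))) := by
  simpa only [ofReal_gaussDen_sub_int_mul hσ] using
    (hasSum_jacobiTheta₂_term _ (theta_modulus_im_pos hσ hα)).mul_left (gaussDen σ x : ℂ)

lemma summable_gaussDen_sub_int_mul (hσ : σ ≠ 0) (hα : α ≠ 0) (x : ℝ) :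
    Summable fun k : ℤ ↦ gaussDen σ (x - k * α) :=
  Complex.summable_ofReal.mp (hasSum_ofReal_gaussDen_sub_int_mul hσ hα x).summable

lemma aliasedDen_pos (hσ : σ ≠ 0) (hα : α ≠ 0) (x : ℝ) : 0 < aliasedDen σ α x :=
  (summable_gaussDen_sub_int_mul hσ hα x).tsum_pos (fun _ ↦ gaussDen_nonneg σ _) 0
    (gaussDen_pos hσ _)

lemma continuous_aliasedDen (hσ : σ ≠ 0) (hα : α ≠ 0) : Continuous (aliasedDen σ α) := by
  have eq_theta : aliasedDen σ α = fun x : ℝ ↦ (gaussDen σ x * jacobiTheta₂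
      (-Complex.I * (x * α / (2 * π * σ ^ 2))) (Complex.I * (α ^ 2 / (2 * π * σ ^ 2)))).re := by
    ext x
    exact (Complex.hasSum_re (hasSum_ofReal_gaussDen_sub_int_mul hσ hα x)).tsum_eq
  have theta_continuous :
      Continuous fun z ↦ jacobiTheta₂ z (Complex.I * (α ^ 2 / (2 * π * σ ^ 2))) :=
    continuous_iff_continuousAt.mpr fun z ↦
      (differentiableAt_jacobiTheta₂_fst z (theta_modulus_im_pos hσ hα)).continuousAt
  rw [eq_theta]
  unfold gaussDen
  fun_prop

lemma periodic_aliasedDen (σ α : ℝ) : Function.Periodic (aliasedDen σ α) α := by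
  intro x
  unfold aliasedDen
  rw [← (Equiv.addRight (1 : ℤ)).tsum_eq]
  refine tsum_congr fun k ↦ congrArg (gaussDen σ) ?_
  rw [Equiv.coe_addRight]
  push_cast
  ring

lemma setIntegral_Ico_aliasedDen (hσ : σ ≠ 0) (hα : 0 < α) :
    ∫ x in Set.Ico 0 α, aliasedDen σ α x = 1 :=
  (setIntegral_Ico_tsum_sub_int_mul (integrable_gaussDen σ) hα).trans (integral_gaussDen hσ)

lemma sum_aliasedDen_nat_mul (hσ : σ ≠ 0) (hα : α ≠ 0) {q : ℕ} (hq : q ≠ 0) (x : ℝ) :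
    ∑ b ∈ Finset.range q, aliasedDen σ (q * α) (x - b * α) = aliasedDen σ α x := by
  unfold aliasedDen
  rw [tsum_int_eq_sum_range_tsum hq (summable_gaussDen_sub_int_mul hσ hα x)]
  refine Finset.sum_congr rfl fun b _ ↦ tsum_congr fun k ↦ congrArg (gaussDen σ) ?_
  push_cast
  ring

lemma aliasedEnt_eq_differentialEntropy (α σ : ℝ) :
    aliasedEnt α σ = differentialEntropy (volume.restrict (Set.Ico 0 α)) (aliasedDen σ α) := by
  simp only [aliasedEnt, differentialEntropy, negMulLog, neg_mul, integral_neg]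

lemma differentialEntropy_Ico_nat_mul_aliasedDen (hσ : σ ≠ 0) (hα : 0 < α) {n : ℕ} (hn : n ≠ 0)
    (b : ℝ) :
    differentialEntropy (volume.restrict (Set.Ico 0 (n * α)))
      (fun x ↦ (n : ℝ)⁻¹ * aliasedDen σ α (x - b)) = aliasedEnt α σ + log n := by
  have hcont : Continuous fun x ↦ aliasedDen σ α (x - b) :=
    (continuous_aliasedDen hσ hα.ne').comp (continuous_sub_right b)
  have hper := periodic_aliasedDen σ α
  rw [differentialEntropy_Ico_nat_mul_of_periodic (hper.sub_const b) hα
      (hcont.intervalIntegrable 0 α) ((continuous_negMulLog.comp hcont).intervalIntegrable 0 α)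
      ((setIntegral_Ico_sub_of_periodic hper hα.le b).trans (setIntegral_Ico_aliasedDen hσ hα)) hn,
    differentialEntropy_Ico_sub_of_periodic hper hα.le, aliasedEnt_eq_differentialEntropy]

end AliasedGaussian

section Channel

variable {σ α : ℝ} {q M : ℕ}

/-- The density `z ↦ M⁻¹ f_{σ,qα}(z - bα)`, on `M` periods of length `qα`, of the output of the
`αℤ/qαℤ` channel with `qαℤ`-aliased Gaussian noise given the input symbol `b < q`. -/
noncomputable def partitionChannelDensity (σ α : ℝ) (q M b : ℕ) (z : ℝ) : ℝ :=
  (M : ℝ)⁻¹ * aliasedDen σ (q * α) (z - b * α)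

lemma outputDensity_partitionChannelDensity (hσ : σ ≠ 0) (hα : α ≠ 0) (hq : q ≠ 0) (z : ℝ) :
    outputDensity (Finset.range q) (fun _ ↦ (q : ℝ)⁻¹) (partitionChannelDensity σ α q M) z =
      ((M * q : ℕ) : ℝ)⁻¹ * aliasedDen σ α z := by
  simp only [outputDensity, partitionChannelDensity, ← Finset.mul_sum,
    sum_aliasedDen_nat_mul hσ hα hq]
  push_cast
  ring

lemma partitionChannelDensity_nonneg (σ α : ℝ) (q M b : ℕ) (z : ℝ) :
    0 ≤ partitionChannelDensity σ α q M b z :=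
  mul_nonneg (by positivity) (tsum_nonneg fun _ ↦ gaussDen_nonneg σ _)

lemma continuous_partitionChannelDensity (hσ : σ ≠ 0) (hα : α ≠ 0) (hq : q ≠ 0) (b : ℕ) :
    Continuous (partitionChannelDensity σ α q M b) :=
  ((continuous_aliasedDen hσ (by positivity)).comp (continuous_sub_right _)).const_mul _

lemma continuous_partitionChannelDensity_mul_log_outputDensity (hσ : σ ≠ 0) (hα : α ≠ 0)
    (hq : q ≠ 0) (hM : M ≠ 0) (b : ℕ) :
    Continuous fun z ↦ partitionChannelDensity σ α q M b z * log (outputDensity (Finset.range q)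
      (fun _ ↦ (q : ℝ)⁻¹) (partitionChannelDensity σ α q M) z) := by
  simp only [outputDensity_partitionChannelDensity hσ hα hq]
  refine (continuous_partitionChannelDensity hσ hα hq b).mul (Continuous.log ?_ fun z ↦ ?_)
  · exact (continuous_aliasedDen hσ hα).const_mul _
  · exact mul_ne_zero (by positivity) (aliasedDen_pos hσ hα z).ne'

lemma differentialEntropy_partitionChannelDensity (hσ : σ ≠ 0) (hα : 0 < α) (hq : q ≠ 0)
    (hM : M ≠ 0) (b : ℕ) :
    differentialEntropy (volume.restrict (Set.Ico 0 (M * (q * α))))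
      (partitionChannelDensity σ α q M b) = aliasedEnt (q * α) σ + log M :=
  differentialEntropy_Ico_nat_mul_aliasedDen hσ (by positivity) hM (b * α)

lemma differentialEntropy_outputDensity_partitionChannelDensity (hσ : σ ≠ 0) (hα : 0 < α)
    (hq : q ≠ 0) (hM : M ≠ 0) :
    differentialEntropy (volume.restrict (Set.Ico 0 (M * (q * α))))
        (outputDensity (Finset.range q) (fun _ ↦ (q : ℝ)⁻¹) (partitionChannelDensity σ α q M)) =
      aliasedEnt α σ + log (M * q) := by
  rw [funext (outputDensity_partitionChannelDensity hσ hα.ne' hq)]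
  simpa [mul_assoc] using
    differentialEntropy_Ico_nat_mul_aliasedDen hσ hα (mul_ne_zero hM hq) 0

theorem first_equivalent_channel_mutual_information_general (hσ : σ ≠ 0) (hα : 0 < α)
    (hq : q ≠ 0) (hM : M ≠ 0) :
    mutualInfo (volume.restrict (Set.Ico 0 (M * (q * α)))) (Finset.range q) (fun _ ↦ (q : ℝ)⁻¹)
        (partitionChannelDensity σ α q M) =
      aliasedEnt α σ - aliasedEnt (q * α) σ + log q := by
  have integrable_of_continuous {f : ℝ → ℝ} (hf : Continuous f) :
      IntegrableOn f (Set.Ico 0 (M * (q * α))) :=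
    hf.integrableOn_Icc.mono_set Set.Ico_subset_Icc_self
  rw [mutualInfo_eq_differentialEntropy_sub
      (fun _ _ ↦ by positivity)
      (fun b _ ↦ partitionChannelDensity_nonneg σ α q M b)
      (fun b _ ↦ integrable_of_continuous
        (continuous_negMulLog.comp (continuous_partitionChannelDensity hσ hα.ne' hq b)))
      (fun b _ ↦ integrable_of_continuous
        (continuous_partitionChannelDensity_mul_log_outputDensity hσ hα.ne' hq hM b)),
    differentialEntropy_outputDensity_partitionChannelDensity hσ hα hq hM]
  simp only [differentialEntropy_partitionChannelDensity hσ hα hq hM, Finset.sum_const,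
    Finset.card_range, nsmul_eq_mul]
  rw [mul_inv_cancel_left₀ (by positivity), log_mul (by positivity) (by positivity)]
  ring

end Channel

/-- the mutual information of the first equivalent channel equals the capacity
`h(1,σ) − h(2,σ) + log 2` of the `ℤ/2ℤ` partition channel, independently of `r`. -/
theorem first_equivalent_channel_mutual_information (σ : ℝ) (hσ : 0 < σ)
    (r : ℕ) (hr : 2 ≤ r) :
    ∑ b ∈ Finset.range 2, ((1 : ℝ) / 2) *
        ∫ z in Set.Ico (0 : ℝ) ((2 : ℝ) ^ (r - 1)),
          eqChDen σ r z b * Real.log (eqChDen σ r z b /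
            (((1 : ℝ) / 2) * (eqChDen σ r z 0 + eqChDen σ r z 1))) =
      aliasedEnt 1 σ - aliasedEnt 2 σ + Real.log 2 := by
  obtain ⟨m, rfl⟩ := Nat.exists_eq_add_of_le' hr
  simpa [mutualInfo, outputDensity, partitionChannelDensity, eqChDen, pow_succ,
    Finset.sum_range_succ, mul_add] using first_equivalent_channel_mutual_information_general
      hσ.ne' one_pos two_ne_zero (pow_ne_zero m (two_ne_zero (α := ℕ)))
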